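/- arXiv:1804.05082 — 4 statements merged into one kernel-verified Lean document; each statement's English description precedes it below -/
import Mathlib

section
/- Let n ≥ 2, r, p, k be integers satisfying k²·(n−1) = r·p and 1 + r + p = n·r. Then k = 0; moreover, either (r, p) = (0, −1), or n = 2 and (r, p) = (1, 0). -/
/-!
With `m = n - 1`, eliminating `p = m * r - 1` leaves the conic `m * (r ^ 2 - k ^ 2) = r`.
Multiplying by `4 * m` and completing the square turns it into
`(2 * m * r - 1) ^ 2 - (2 * m * k) ^ 2 = 1`, and two integer squares differ by `1` only if the
smaller one is `0`.
-/

theorem eq_zero_of_sq_sub_sq_eq_one {x y : ℤ} (h : x ^ 2 - y ^ 2 = 1) : y = 0 := by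
  have factors_eq : x + y = x - y := Int.eq_of_mul_eq_one (by rw [← sq_sub_sq, h])
  lia

theorem eq_zero_of_mul_sq_sub_sq_eq {m r k : ℤ} (hm : m ≠ 0) (h : m * (r ^ 2 - k ^ 2) = r) :
    k = 0 := by
  have square_completed : (2 * m * r - 1) ^ 2 - (2 * m * k) ^ 2 = 1 := by
    linear_combination 4 * m * h
  simpa [hm] using eq_zero_of_sq_sub_sq_eq_one square_completed

theorem stmt_2_general {n r p k : ℤ} (hn : n ≠ 1) (h1 : k ^ 2 * (n - 1) = r * p)
    (h2 : 1 + r + p = n * r) :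
    k = 0 ∧ ((r = 0 ∧ p = -1) ∨ (n = 2 ∧ r = 1 ∧ p = 0) ∨ (n = 0 ∧ r = -1 ∧ p = 0)) := by
  have conic : (n - 1) * (r ^ 2 - k ^ 2) = r := by linear_combination -h1 - r * h2
  obtain rfl : k = 0 := eq_zero_of_mul_sq_sub_sq_eq (sub_ne_zero.mpr hn) conic
  refine ⟨rfl, ?_⟩
  have r_mul_p : r * p = 0 := by linear_combination -h1
  rcases mul_eq_zero.mp r_mul_p with rfl | rfl
  · left
    lia
  · right
    have sub_one_mul_r : (n - 1) * r = 1 := by linear_combination -h2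
    rcases Int.eq_one_or_neg_one_of_mul_eq_one' sub_one_mul_r with ⟨_, _⟩ | ⟨_, _⟩ <;> lia

/-- For integers `n ≥ 2`, `r`, `p`, `k` with `k²(n−1) = rp` and `1 + r + p = nr`, we must have
`k = 0`; moreover either `(r, p) = (0, −1)`, or `n = 2` and `(r, p) = (1, 0)`. -/
theorem stmt_2 (n r p k : ℤ) (hn : 2 ≤ n) (h1 : k ^ 2 * (n - 1) = r * p)
    (h2 : 1 + r + p = n * r) :
    k = 0 ∧ ((r = 0 ∧ p = -1) ∨ (n = 2 ∧ r = 1 ∧ p = 0)) := by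
  have solutions := stmt_2_general (by lia) h1 h2
  lia
end

section
/- Let n ≥ 2 and r ≥ 2 be integers, let ch₂ be an integer, and let d_h, d_g be real numbers such that −2 = (d_h² − d_g²) − 2·r·(ch₂ + r). Set χ := n·r − ch₂ − 2·r, and assume −4r < χ < 0. Then (n·r + ch₂)² − 2·n·d_h² < 0. -/
/-- With `χ = n * r - c - 2 * r`, the first product on the right is `χ * (χ + 4 * r)`. -/
theorem discriminant_eq_of_spherical {R : Type*} [CommRing R] {r c dh dg : R}
    (hsph : -2 = (dh ^ 2 - dg ^ 2) - 2 * r * (c + r)) (n : R) :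
    (n * r + c) ^ 2 - 2 * n * dh ^ 2 =
      (n * r - c - 2 * r) * (n * r - c + 2 * r) - 4 * (n * r ^ 2 - (n + r ^ 2))
        - 2 * n * dg ^ 2 := by
  linear_combination 2 * n * hsph

theorem stmt_4_general {R : Type*} [CommRing R] [LinearOrder R] [IsStrictOrderedRing R]
    {n r c dh dg : R} (hn : 0 ≤ n) (hnr : n + r ^ 2 ≤ n * r ^ 2)
    (hsph : -2 = (dh ^ 2 - dg ^ 2) - 2 * r * (c + r))
    (hchi1 : -4 * r < n * r - c - 2 * r) (hchi2 : n * r - c - 2 * r < 0) :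
    (n * r + c) ^ 2 - 2 * n * dh ^ 2 < 0 := by
  have hchi : (n * r - c - 2 * r) * (n * r - c + 2 * r) < 0 :=
    mul_neg_of_neg_of_pos hchi2 (by linarith)
  have hdg : 0 ≤ 2 * n * dg ^ 2 := by positivity
  rw [discriminant_eq_of_spherical hsph]
  linarith

/-- For integers `n ≥ 2`, `r ≥ 2`, `ch₂` and reals `d_h`, `d_g` with
`−2 = (d_h² − d_g²) − 2r(ch₂ + r)`, if `χ := nr − ch₂ − 2r` satisfies `−4r < χ < 0`, then the
discriminant `(nr + ch₂)² − 2n·d_h²` is negative. -/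
theorem stmt_4 (n r ch2 : ℤ) (hn : 2 ≤ n) (hr : 2 ≤ r)
    (dh dg : ℝ)
    (hsph : (-2 : ℝ) = (dh ^ 2 - dg ^ 2) - 2 * (r : ℝ) * ((ch2 : ℝ) + (r : ℝ)))
    (hchi1 : -4 * r < n * r - ch2 - 2 * r) (hchi2 : n * r - ch2 - 2 * r < 0) :
    ((n : ℝ) * (r : ℝ) + (ch2 : ℝ)) ^ 2 - 2 * (n : ℝ) * dh ^ 2 < 0 := by
  have hr_sq : 2 ≤ r ^ 2 := by nlinarith
  exact stmt_4_general (by positivity) (add_le_mul (mod_cast hn) (mod_cast hr_sq)) hsph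
    (mod_cast hchi1) (mod_cast hchi2)
end

section
/- Let n ≥ 2 and r ≥ 1 be integers, let ch₂ be an integer with n·r − ch₂ ≤ −2·r, and let d_h be a real number with d_h < 0 and d_h² ≥ 2·r·ch₂ + 2·(r² − 1). Then there exist no real numbers u and t with t > 0 such that d_h·(u² + t²) − 2·(n·r + ch₂)·u + 2·n·d_h = 0 and r·u ≤ d_h. -/
/-!
Dividing the wall equation by `d_h` exhibits the wall as a semicircle in the `(u, t)` half-plane
centred on the axis `t = 0`. The slope `μ = d_h / r` of `E`, viewed as a point of that axis, has
power `(d_h² - 2r·ch₂) / r² ≥ 0` with respect to this circle, so it does not lie inside. It is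
also not to the right of the centre `(nr + ch₂) / d_h`, because `r(nr + ch₂) ≤ 2r·ch₂ ≤ d_h²` and
`d_h < 0`. Hence the whole semicircle lies strictly to the right of `μ`, whereas membership in the
heart requires `u ≤ μ`.
-/

theorem lt_of_sq_sub_add_sq_eq {R : Type*} [CommRing R] [LinearOrder R] [IsStrictOrderedRing R]
    {s ρ x u t : R} (hxs : x ≤ s) (hρ : ρ ≤ (x - s) ^ 2) (ht : t ≠ 0)
    (hut : (u - s) ^ 2 + t ^ 2 = ρ) : x < u := by
  have hdist : (s - u) ^ 2 < (s - x) ^ 2 := by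
    rw [sub_sq_comm s u, sub_sq_comm s x]
    linarith [sq_pos_of_ne_zero ht]
  exact (sub_lt_sub_iff_left s).mp (lt_of_pow_lt_pow_left₀ 2 (sub_nonneg.mpr hxs) hdist)

section Wall

variable {K : Type*} [Field K]

/-- The centre, on the axis `t = 0`, of the numerical wall caused on the slice `P_H` for the ideal
sheaf of `n` points by a class of rank `r` with `ch₂ = c` and `d_h = d`. It is only meaningful
for `d ≠ 0`. -/
def wallCenter (n r c d : K) : K := (n * r + c) / d

/-- The squared radius of the numerical wall with centre `wallCenter n r c d`. It may be negative,
in which case the wall is empty. -/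
def wallRadiusSq (n r c d : K) : K := wallCenter n r c d ^ 2 - 2 * n

theorem wall_equation_iff {d : K} (hd : d ≠ 0) (n r c u t : K) :
    d * (u ^ 2 + t ^ 2) - 2 * (n * r + c) * u + 2 * n * d = 0 ↔
      (u - wallCenter n r c d) ^ 2 + t ^ 2 = wallRadiusSq n r c d := by
  have hfactor : d * (u ^ 2 + t ^ 2) - 2 * (n * r + c) * u + 2 * n * d =
      d * ((u - wallCenter n r c d) ^ 2 + t ^ 2 - wallRadiusSq n r c d) := by
    unfold wallRadiusSq wallCenter
    field_simp
    ring
  rw [hfactor, mul_eq_zero_iff_left hd, sub_eq_zero]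

theorem sq_slope_sub_wallCenter_sub_wallRadiusSq {r d : K} (hr : r ≠ 0) (hd : d ≠ 0) (n c : K) :
    (d / r - wallCenter n r c d) ^ 2 - wallRadiusSq n r c d = (d ^ 2 - 2 * r * c) / r ^ 2 := by
  unfold wallRadiusSq wallCenter
  field_simp
  ring

variable [LinearOrder K] [IsStrictOrderedRing K] {n r c d : K}

theorem slope_le_wallCenter_iff (hr : 0 < r) (hd : d < 0) :
    d / r ≤ wallCenter n r c d ↔ r * (n * r + c) ≤ d ^ 2 := by
  rw [wallCenter, le_div_iff_of_neg hd, div_mul_eq_mul_div, ← sq, le_div_iff₀' hr]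

theorem wallRadiusSq_le_sq_slope_sub_wallCenter_iff (hr : r ≠ 0) (hd : d ≠ 0) :
    wallRadiusSq n r c d ≤ (d / r - wallCenter n r c d) ^ 2 ↔ 2 * r * c ≤ d ^ 2 := by
  rw [← sub_nonneg, sq_slope_sub_wallCenter_sub_wallRadiusSq hr hd,
    le_div_iff₀ (sq_pos_of_ne_zero hr), zero_mul, sub_nonneg]

theorem stmt_6_general (hr : 0 < r) (hd : d < 0) (hnc : n * r ≤ c) (hcd : 2 * r * c ≤ d ^ 2) :
    ¬ ∃ u t : K, t ≠ 0 ∧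
      d * (u ^ 2 + t ^ 2) - 2 * (n * r + c) * u + 2 * n * d = 0 ∧ r * u ≤ d := by
  rintro ⟨u, t, ht, hwall, hu⟩
  have hcenter : d / r ≤ wallCenter n r c d := by
    rw [slope_le_wallCenter_iff hr hd]
    calc r * (n * r + c) ≤ r * (c + c) := by gcongr
      _ = 2 * r * c := by ring
      _ ≤ d ^ 2 := hcd
  have houtside : wallRadiusSq n r c d ≤ (d / r - wallCenter n r c d) ^ 2 :=
    (wallRadiusSq_le_sq_slope_sub_wallCenter_iff hr.ne' hd.ne).mpr hcd
  have hright : d / r < u :=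
    lt_of_sq_sub_add_sq_eq hcenter houtside ht ((wall_equation_iff hd.ne n r c u t).mp hwall)
  exact ((div_lt_iff₀' hr).mp hright).not_ge hu

end Wall

/-- For integers `n ≥ 2`, `r ≥ 1`, `ch₂` with `nr − ch₂ ≤ −2r` and a real `d_h < 0` with
`d_h² ≥ 2r·ch₂ + 2(r² − 1)`, there are no reals `u`, `t` with `t > 0` satisfying the wall
equation `d_h(u² + t²) − 2(nr + ch₂)u + 2n·d_h = 0` together with `r·u ≤ d_h`. -/
theorem stmt_6 (n r ch2 : ℤ) (hn : 2 ≤ n) (hr : 1 ≤ r) (hch : n * r - ch2 ≤ -2 * r)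
    (dh : ℝ) (hdh : dh < 0)
    (hdh2 : ((2 * r * ch2 + 2 * (r ^ 2 - 1) : ℤ) : ℝ) ≤ dh ^ 2) :
    ¬ ∃ u t : ℝ, 0 < t ∧
      dh * (u ^ 2 + t ^ 2) - 2 * ((n : ℝ) * (r : ℝ) + (ch2 : ℝ)) * u + 2 * (n : ℝ) * dh = 0 ∧
      (r : ℝ) * u ≤ dh := by
  have hnc : n * r ≤ ch2 := by linarith
  have hsq : 2 * r * ch2 ≤ 2 * r * ch2 + 2 * (r ^ 2 - 1) := by linarith [one_le_pow₀ hr (n := 2)]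
  rintro ⟨u, t, ht, hwall⟩
  exact stmt_6_general (mod_cast hr) hdh (mod_cast hnc)
    (le_trans (mod_cast hsq) hdh2) ⟨u, t, ht.ne', hwall⟩
end

section
/- Let k, r, m, n be integers with r ≥ 1 and m ≥ n ≥ 2. If −(m−1)·k² + n + k·(m−n) = r·(r+1), then k = 0 and n = r·(r+1). -/
/-!
The left-hand side equals `1 - (k - 1) * ((m - 1) * k + (n - 1))`. Since `|n - 1| ≤ m - 1`, both
factors of the product are nonpositive for integers `k ≤ -1` and nonnegative for `k ≥ 1`. Hence a
value greater than `1`, such as `r * (r + 1)`, is only attained at `k = 0`.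
-/

section

variable {R : Type*} [CommRing R] [LinearOrder R] [IsStrictOrderedRing R]

theorem sub_one_mul_mul_add_nonneg_of_abs_le {a b : R} (hab : |b| ≤ a) {k : ℤ} (hk : k ≠ 0) :
    0 ≤ ((k : R) - 1) * (a * k + b) := by
  have ha : 0 ≤ a := (abs_nonneg b).trans hab
  obtain ⟨hb_lower, hb_upper⟩ := abs_le.mp hab
  rcases hk.lt_or_gt with hneg | hpos
  · have hk_le : (k : R) ≤ -1 := by exact_mod_cast Int.le_sub_one_of_lt hneg
    have hk_sub : (k : R) - 1 ≤ 0 := by linarith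
    have hlin : a * k + b ≤ 0 := by
      calc a * k + b ≤ a * (-1) + a := by gcongr
        _ = 0 := by ring
    exact mul_nonneg_of_nonpos_of_nonpos hk_sub hlin
  · have hk_ge : 1 ≤ (k : R) := by exact_mod_cast hpos
    have hlin : 0 ≤ a * k + b := by
      calc 0 = a * 1 + -a := by ring
        _ ≤ a * k + b := by gcongr
    exact mul_nonneg (sub_nonneg.mpr hk_ge) hlin

theorem quadratic_le_one_of_ne_zero {m n : R} (hmn : |n - 1| ≤ m - 1) {k : ℤ} (hk : k ≠ 0) :
    -(m - 1) * (k : R) ^ 2 + n + k * (m - n) ≤ 1 :=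
  calc -(m - 1) * (k : R) ^ 2 + n + k * (m - n)
      = 1 - ((k : R) - 1) * ((m - 1) * k + (n - 1)) := by ring
    _ ≤ 1 := sub_le_self 1 (sub_one_mul_mul_add_nonneg_of_abs_le hmn hk)

theorem stmt_9_general {m n s : R} (hmn : |n - 1| ≤ m - 1) (hs : 1 < s) {k : ℤ}
    (h : -(m - 1) * (k : R) ^ 2 + n + k * (m - n) = s) :
    k = 0 ∧ n = s := by
  have hk : k = 0 := by
    by_contra hne
    exact hs.not_ge (h ▸ quadratic_le_one_of_ne_zero hmn hne)
  subst hk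
  exact ⟨rfl, by simpa using h⟩

end

/-- Diophantine lemma: for integers `k`, `r`, `m`, `n` with `r ≥ 1` and `m ≥ n ≥ 2`, if
`−(m−1)k² + n + k(m−n) = r(r+1)` then `k = 0` and `n = r(r+1)`. -/
theorem stmt_9 (k r m n : ℤ) (hr : 1 ≤ r) (hmn : n ≤ m) (hn : 2 ≤ n)
    (h : -(m - 1) * k ^ 2 + n + k * (m - n) = r * (r + 1)) :
    k = 0 ∧ n = r * (r + 1) := by
  have hs : 1 < r * (r + 1) := by nlinarith
  have habs : |n - 1| ≤ m - 1 := abs_le.mpr ⟨by linarith, by linarith⟩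
  exact stmt_9_general habs hs (by simpa only [Int.cast_id] using h)
end
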